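/- Under Assumption (Lip), for any ε > 0 there exists M' ∈ ℕ such that for all M > M', any solution (𝛑, 𝛍) of the M equivalence classes method (𝛑 block-constant with π^α = π^{α_m} optimal for J^𝛍_{α_m} on Ĩ_m, and 𝛍 = Ψ̂(𝛑)) satisfies sup_{α∈[0,1]} max_{π∈Π} ( J^{𝛍̄}_α(π) − J^{𝛍̄}_α(π^α) ) < ε, where 𝛍̄ = Ψ(𝛑) is the exact mean field ensemble generated by the block-constant policy ensemble 𝛑. -/

import Mathlib

open MeasureTheory Filter
open scoped BigOperators

namespace GMFG

variable {𝒳 𝒰 : Type*}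

/-- The probability simplex 𝒫(𝒳) on a finite set, as probability mass functions. -/
def simplex (𝒳 : Type*) [Fintype 𝒳] : Set (𝒳 → ℝ) :=
  {p | (∀ x, 0 ≤ p x) ∧ ∑ x, p x = 1}

/-- The set ℬ₁(𝒳) of (sub-probability) measures with total mass at most 1,
as mass functions. -/
def subProb (𝒳 : Type*) [Fintype 𝒳] : Set (𝒳 → ℝ) :=
  {p | (∀ x, 0 ≤ p x) ∧ ∑ x, p x ≤ 1}

/-- L¹ distance between measures on a finite set. -/
noncomputable def l1dist [Fintype 𝒳] (ν ν' : 𝒳 → ℝ) : ℝ := ∑ x, |ν x - ν' x|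

/-- Markovian feedback policies π ∈ Π = 𝒫(𝒰)^{𝒯×𝒳}. -/
def IsPolicy [Fintype 𝒰] (π : ℕ → 𝒳 → 𝒰 → ℝ) : Prop :=
  ∀ t x, (∀ u, 0 ≤ π t x u) ∧ ∑ u, π t x u = 1

/-- P : 𝒳×𝒰×ℬ₁(𝒳) → 𝒫(𝒳) is a transition kernel. -/
def IsKernel [Fintype 𝒳] [Fintype 𝒰] (P : 𝒳 → 𝒰 → (𝒳 → ℝ) → 𝒳 → ℝ) : Prop :=
  ∀ x u ν, ν ∈ subProb 𝒳 → P x u ν ∈ simplex 𝒳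

/-- Lipschitz continuity of the transition kernel w.r.t. the L¹ norm. -/
def KernelLipschitz [Fintype 𝒳] [Fintype 𝒰] (P : 𝒳 → 𝒰 → (𝒳 → ℝ) → 𝒳 → ℝ) (L : ℝ) : Prop :=
  ∀ x u ν ν', ν ∈ subProb 𝒳 → ν' ∈ subProb 𝒳 → l1dist (P x u ν) (P x u ν') ≤ L * l1dist ν ν'

/-- Lipschitz continuity of the reward w.r.t. the L¹ norm. -/
def RewardLipschitz [Fintype 𝒳] [Fintype 𝒰] (r : 𝒳 → 𝒰 → (𝒳 → ℝ) → ℝ) (L : ℝ) : Prop :=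
  ∀ x u ν ν', ν ∈ subProb 𝒳 → ν' ∈ subProb 𝒳 → |r x u ν - r x u ν'| ≤ L * l1dist ν ν'

/-- A graphon: symmetric, measurable, [0,1]-valued. -/
def IsGraphon (W : ℝ → ℝ → ℝ) : Prop :=
  Measurable (Function.uncurry W) ∧ (∀ a b, W a b = W b a) ∧ ∀ a b, W a b ∈ Set.Icc (0:ℝ) 1

/-- Lipschitz continuity of a graphon on [0,1]². -/
def GraphonLipschitz (W : ℝ → ℝ → ℝ) (L : ℝ) : Prop :=
  ∀ a b a' b' : ℝ, a ∈ Set.Icc (0:ℝ) 1 → b ∈ Set.Icc (0:ℝ) 1 → a' ∈ Set.Icc (0:ℝ) 1 →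
    b' ∈ Set.Icc (0:ℝ) 1 → |W a b - W a' b'| ≤ L * (|a - a'| + |b - b'|)

/-- The neighborhood mean field 𝔾^α = ∫₀¹ W(α,β) ν^β dβ of a state marginal ensemble ν. -/
noncomputable def nbhd [Fintype 𝒳] (W : ℝ → ℝ → ℝ) (ν : ℝ → 𝒳 → ℝ) (α : ℝ) : 𝒳 → ℝ :=
  fun x => ∫ β in Set.Ioc (0:ℝ) 1, W α β * ν β x

/-- 𝛍 = Ψ(𝛑): the (measurable) mean field ensemble generated by the policy ensemble 𝛑,
via μ^α_0 = μ₀ and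
μ^α_{t+1}(x') = Σ_{x,u} μ^α_t(x) π^α_t(u|x) P(x'|x,u,𝔾^α_t). -/
def IsMeanFieldOf [Fintype 𝒳] [Fintype 𝒰] (W : ℝ → ℝ → ℝ) (P : 𝒳 → 𝒰 → (𝒳 → ℝ) → 𝒳 → ℝ)
    (μ0 : 𝒳 → ℝ) (πe : ℝ → ℕ → 𝒳 → 𝒰 → ℝ) (μ : ℕ → ℝ → 𝒳 → ℝ) : Prop :=
  (∀ t x, Measurable fun α => μ t α x) ∧
  (∀ α ∈ Set.Icc (0:ℝ) 1, μ 0 α = μ0) ∧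
  ∀ t : ℕ, ∀ α ∈ Set.Icc (0:ℝ) 1, ∀ x' : 𝒳,
    μ (t+1) α x' = ∑ x, μ t α x * ∑ u, πe α t x u * P x u (nbhd W (μ t) α) x'

/-- The law of the state of a single mean field agent with neighborhood mean field
G and policy π: X_0 ∼ μ₀, U_t ∼ π_t(·|X_t), X_{t+1} ∼ P(·|X_t,U_t,G_t). -/
noncomputable def stateLaw [Fintype 𝒳] [Fintype 𝒰] (P : 𝒳 → 𝒰 → (𝒳 → ℝ) → 𝒳 → ℝ)
    (μ0 : 𝒳 → ℝ) (G : ℕ → 𝒳 → ℝ) (π : ℕ → 𝒳 → 𝒰 → ℝ) : ℕ → 𝒳 → ℝ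
  | 0 => μ0
  | (t+1) => fun x' => ∑ x, stateLaw P μ0 G π t x * ∑ u, π t x u * P x u (G t) x'

/-- Mean field objective J(π) = E[Σ_{t<T} r(X_t,U_t,G_t)] of a single agent whose
neighborhood mean field is G. -/
noncomputable def Jmf [Fintype 𝒳] [Fintype 𝒰] (T : ℕ) (r : 𝒳 → 𝒰 → (𝒳 → ℝ) → ℝ)
    (P : 𝒳 → 𝒰 → (𝒳 → ℝ) → 𝒳 → ℝ) (μ0 : 𝒳 → ℝ) (G : ℕ → 𝒳 → ℝ) (π : ℕ → 𝒳 → 𝒰 → ℝ) : ℝ :=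
  ∑ t ∈ Finset.range T, ∑ x, stateLaw P μ0 G π t x * ∑ u, π t x u * r x u (G t)

/-- A Graphon Mean Field Equilibrium: a measurable policy ensemble 𝛑 and mean field
ensemble 𝛍 with 𝛍 = Ψ(𝛑) and π^α optimal for J^𝛍_α for every α ∈ [0,1]. -/
def IsGMFE [Fintype 𝒳] [Fintype 𝒰] (T : ℕ) (W : ℝ → ℝ → ℝ) (P : 𝒳 → 𝒰 → (𝒳 → ℝ) → 𝒳 → ℝ)
    (r : 𝒳 → 𝒰 → (𝒳 → ℝ) → ℝ) (μ0 : 𝒳 → ℝ)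
    (πe : ℝ → ℕ → 𝒳 → 𝒰 → ℝ) (μ : ℕ → ℝ → 𝒳 → ℝ) : Prop :=
  (∀ t x u, Measurable fun α => πe α t x u) ∧
  (∀ α ∈ Set.Icc (0:ℝ) 1, IsPolicy (πe α)) ∧
  IsMeanFieldOf W P μ0 πe μ ∧
  ∀ α ∈ Set.Icc (0:ℝ) 1, ∀ π' : ℕ → 𝒳 → 𝒰 → ℝ, IsPolicy π' →
    Jmf T r P μ0 (fun t => nbhd W (μ t) α) π' ≤ Jmf T r P μ0 (fun t => nbhd W (μ t) α) (πe α)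

/-- α ↦ π^α is Lipschitz continuous up to a finite set D of discontinuities. -/
def EnsembleLipschitzUpTo [Fintype 𝒳] [Fintype 𝒰] (πe : ℝ → ℕ → 𝒳 → 𝒰 → ℝ) : Prop :=
  ∃ (L : ℝ) (D : Finset ℝ), ∀ (t : ℕ) (x : 𝒳) (u : 𝒰),
    ∀ α ∈ Set.Icc (0:ℝ) 1, ∀ β ∈ Set.Icc (0:ℝ) 1,
      (∀ d ∈ D, d ∉ Set.uIcc α β) → |πe α t x u - πe β t x u| ≤ L * |α - β|

/-- Edge indicators of a simple (undirected) graph. -/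
def IsEdgeWeights {N : ℕ} (ξ : Fin N → Fin N → ℝ) : Prop :=
  (∀ i j, ξ i j = 0 ∨ ξ i j = 1) ∧ ∀ i j, ξ i j = ξ j i

/-- Empirical neighborhood mean field 𝔾ⁱ = (1/N) Σ_j ξ_{ij} δ_{X^j}. -/
noncomputable def empNbhd [Fintype 𝒳] [DecidableEq 𝒳] {N : ℕ} (ξ : Fin N → Fin N → ℝ)
    (X : Fin N → 𝒳) (i : Fin N) : 𝒳 → ℝ :=
  fun x => (N : ℝ)⁻¹ * ∑ j, ξ i j * (if X j = x then 1 else 0)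

/-- The joint law of the N agents' states at time t: X^i_0 ∼ μ₀ i.i.d.,
U^i_t ∼ π^i_t(·|X^i_t), X^i_{t+1} ∼ P(·|X^i_t,U^i_t,𝔾^i_t) conditionally independently. -/
noncomputable def jointLaw [Fintype 𝒳] [DecidableEq 𝒳] [Fintype 𝒰] {N : ℕ}
    (P : 𝒳 → 𝒰 → (𝒳 → ℝ) → 𝒳 → ℝ) (μ0 : 𝒳 → ℝ) (ξ : Fin N → Fin N → ℝ)
    (πs : Fin N → ℕ → 𝒳 → 𝒰 → ℝ) : ℕ → (Fin N → 𝒳) → ℝ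
  | 0 => fun X => ∏ i, μ0 (X i)
  | (t+1) => fun Y => ∑ X : Fin N → 𝒳, jointLaw P μ0 ξ πs t X *
      ∏ i, ∑ u, πs i t (X i) u * P (X i) u (empNbhd ξ X i) (Y i)

/-- The objective J^N_i = E[Σ_{t<T} r(X^i_t,U^i_t,𝔾^i_t)] of agent i in the N-agent game. -/
noncomputable def JN [Fintype 𝒳] [DecidableEq 𝒳] [Fintype 𝒰] {N : ℕ} (T : ℕ)
    (r : 𝒳 → 𝒰 → (𝒳 → ℝ) → ℝ) (P : 𝒳 → 𝒰 → (𝒳 → ℝ) → 𝒳 → ℝ) (μ0 : 𝒳 → ℝ)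
    (ξ : Fin N → Fin N → ℝ) (πs : Fin N → ℕ → 𝒳 → 𝒰 → ℝ) (i : Fin N) : ℝ :=
  ∑ t ∈ Finset.range T, ∑ X : Fin N → 𝒳, jointLaw P μ0 ξ πs t X *
    ∑ u, πs i t (X i) u * r (X i) u (empNbhd ξ X i)

/-- Γ_N(𝛑) = (π^{1/N},…,π^{N/N}) (agent i : Fin N has graphon index (i+1)/N). -/
noncomputable def gammaN (πe : ℝ → ℕ → 𝒳 → 𝒰 → ℝ) (N : ℕ) : Fin N → ℕ → 𝒳 → 𝒰 → ℝ :=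
  fun i => πe ((((i : ℕ) : ℝ) + 1) / N)

/-- The step graphon W_N of a finite graph: W_N(x,y) = ξ_{⌈Nx⌉,⌈Ny⌉}. -/
noncomputable def stepGraphon {N : ℕ} (ξ : Fin N → Fin N → ℝ) : ℝ → ℝ → ℝ := fun a b =>
  ∑ i : Fin N, ∑ j : Fin N,
    (if ((i : ℕ) : ℝ) / N < a ∧ a ≤ (((i : ℕ) : ℝ) + 1) / N then 1 else 0) *
    (if ((j : ℕ) : ℝ) / N < b ∧ b ≤ (((j : ℕ) : ℝ) + 1) / N then 1 else 0) * ξ i j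

/-- Assumption (W): ‖W_N − W‖_{L∞→L1} → 0, i.e.
sup_{‖g‖∞ ≤ 1} ∫₀¹ |∫₀¹ (W_N(α,β) − W(α,β)) g(β) dβ| dα → 0. -/
def OpConvergesTo (WN : (N : ℕ) → ℝ → ℝ → ℝ) (W : ℝ → ℝ → ℝ) : Prop :=
  ∀ ε > (0:ℝ), ∃ N₀ : ℕ, ∀ N ≥ N₀, ∀ g : ℝ → ℝ, Measurable g → (∀ β, |g β| ≤ 1) →
    (∫ α in Set.Ioc (0:ℝ) 1, |∫ β in Set.Ioc (0:ℝ) 1, (WN N α β - W α β) * g β|) ≤ ε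

/-- ‖W_N − W‖_{L∞→L1} = O(1/√N). -/
def OpRateSqrt (WN : (N : ℕ) → ℝ → ℝ → ℝ) (W : ℝ → ℝ → ℝ) : Prop :=
  ∃ C : ℝ, ∀ N : ℕ, 1 ≤ N → ∀ g : ℝ → ℝ, Measurable g → (∀ β, |g β| ≤ 1) →
    (∫ α in Set.Ioc (0:ℝ) 1, |∫ β in Set.Ioc (0:ℝ) 1, (WN N α β - W α β) * g β|) ≤ C / Real.sqrt N

/-- 𝛍^N_t(f) = ∫₀¹ f(X^{⌈Nα⌉}, α) dα, the integral of f against the random empirical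
step measure ensemble. -/
noncomputable def empInt [Fintype 𝒳] {N : ℕ} (f : 𝒳 → ℝ → ℝ) (X : Fin N → 𝒳) : ℝ :=
  ∑ i : Fin N, ∫ α in Set.Ioc (((i : ℕ) : ℝ) / N) ((((i : ℕ) : ℝ) + 1) / N), f (X i) α

/-- 𝛍_t(f) = ∫₀¹ Σ_x f(x,α) μ^α_t(x) dα. -/
noncomputable def mfInt [Fintype 𝒳] (f : 𝒳 → ℝ → ℝ) (ν : ℝ → 𝒳 → ℝ) : ℝ :=
  ∫ α in Set.Ioc (0:ℝ) 1, ∑ x, f x α * ν α x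

/-- The representative α_m = (m+1)/M of the m-th equivalence class Ĩ_m = (m/M,(m+1)/M]. -/
noncomputable def rep (M : ℕ) (m : Fin M) : ℝ := (((m : ℕ) : ℝ) + 1) / M

/-- Discretized neighborhood mean field 𝔾̂^{α_m} = (1/M) Σ_n W(α_m,α_n) ν^{α_n}. -/
noncomputable def approxNbhd [Fintype 𝒳] {M : ℕ} (W : ℝ → ℝ → ℝ) (ν : Fin M → 𝒳 → ℝ)
    (m : Fin M) : 𝒳 → ℝ :=
  fun x => (M : ℝ)⁻¹ * ∑ n, W (rep M m) (rep M n) * ν n x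

/-- The approximate mean field μ̂ = Ψ̂(𝛑) of the M equivalence classes method. -/
noncomputable def approxMF [Fintype 𝒳] [Fintype 𝒰] {M : ℕ} (W : ℝ → ℝ → ℝ)
    (P : 𝒳 → 𝒰 → (𝒳 → ℝ) → 𝒳 → ℝ) (μ0 : 𝒳 → ℝ) (πm : Fin M → ℕ → 𝒳 → 𝒰 → ℝ) :
    ℕ → Fin M → 𝒳 → ℝ
  | 0 => fun _ => μ0
  | (t+1) => fun m x' => ∑ x, approxMF W P μ0 πm t m x *
      ∑ u, πm m t x u * P x u (approxNbhd W (approxMF W P μ0 πm t) m) x'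

/-- A solution (𝛑, 𝛍) of the M equivalence classes method: 𝛑 is determined by policies
π^{α_m} (one per class), each optimal for the generated approximate mean field 𝛍 = Ψ̂(𝛑). -/
def IsEqClassSolution [Fintype 𝒳] [Fintype 𝒰] (T : ℕ) {M : ℕ} (W : ℝ → ℝ → ℝ)
    (P : 𝒳 → 𝒰 → (𝒳 → ℝ) → 𝒳 → ℝ) (r : 𝒳 → 𝒰 → (𝒳 → ℝ) → ℝ) (μ0 : 𝒳 → ℝ)
    (πm : Fin M → ℕ → 𝒳 → 𝒰 → ℝ) : Prop :=
  (∀ m, IsPolicy (πm m)) ∧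
  ∀ m, ∀ π' : ℕ → 𝒳 → 𝒰 → ℝ, IsPolicy π' →
    Jmf T r P μ0 (fun t => approxNbhd W (approxMF W P μ0 πm t) m) π'
      ≤ Jmf T r P μ0 (fun t => approxNbhd W (approxMF W P μ0 πm t) m) (πm m)

/-- The optimal action value function Q with k steps to go from time t,
Q(t,x,u) = r(x,u,G_t) + Σ_{x'} P(x'|x,u,G_t) max_{u'} Q(t+1,x',u'). -/
noncomputable def Qfun [Fintype 𝒳] [Fintype 𝒰] [Nonempty 𝒰] (r : 𝒳 → 𝒰 → (𝒳 → ℝ) → ℝ)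
    (P : 𝒳 → 𝒰 → (𝒳 → ℝ) → 𝒳 → ℝ) (G : ℕ → 𝒳 → ℝ) : ℕ → ℕ → 𝒳 → 𝒰 → ℝ
  | 0 => fun _ _ _ => 0
  | (k+1) => fun t x u => r x u (G t) + ∑ x', P x u (G t) x' *
      Finset.univ.sup' Finset.univ_nonempty (fun u' => Qfun r P G k (t+1) x' u')

/-- The Boltzmann (softmax) policy Φ̂_η(𝛍) of the M equivalence classes method with
horizon T, temperature η and block mean field ν. -/
noncomputable def boltzmann [Fintype 𝒳] [Fintype 𝒰] [Nonempty 𝒰] (T : ℕ) (η : ℝ)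
    (r : 𝒳 → 𝒰 → (𝒳 → ℝ) → ℝ) (P : 𝒳 → 𝒰 → (𝒳 → ℝ) → 𝒳 → ℝ) (W : ℝ → ℝ → ℝ) {M : ℕ}
    (ν : ℕ → Fin M → 𝒳 → ℝ) : Fin M → ℕ → 𝒳 → 𝒰 → ℝ :=
  fun m t x u =>
    Real.exp (Qfun r P (fun s => approxNbhd W (ν s) m) (T - t) t x u / η) /
      ∑ u' : 𝒰, Real.exp (Qfun r P (fun s => approxNbhd W (ν s) m) (T - t) t x u' / η)

/-- One step 𝛍 ↦ Ψ̂(Φ̂_η(𝛍)) of the Boltzmann fixed point iteration. -/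
noncomputable def boltzIter [Fintype 𝒳] [Fintype 𝒰] [Nonempty 𝒰] (T : ℕ) (η : ℝ)
    (r : 𝒳 → 𝒰 → (𝒳 → ℝ) → ℝ) (P : 𝒳 → 𝒰 → (𝒳 → ℝ) → 𝒳 → ℝ) (W : ℝ → ℝ → ℝ) (μ0 : 𝒳 → ℝ)
    {M : ℕ} (ν : ℕ → Fin M → 𝒳 → ℝ) : ℕ → Fin M → 𝒳 → ℝ :=
  fun t => approxMF W P μ0 (boltzmann T η r P W ν) t


lemma mix_mem {ι κ : Type*} [Fintype ι] [Fintype κ] (p : ι → ℝ) (hp : p ∈ simplex ι)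
    (A : ι → κ → ℝ) (hA : ∀ x, A x ∈ simplex κ) :
    (fun y => ∑ x, p x * A x y) ∈ simplex κ := by
  refine ⟨fun y => Finset.sum_nonneg fun x _ => mul_nonneg (hp.1 x) ((hA x).1 y), ?_⟩
  rw [Finset.sum_comm]
  simp_rw [← Finset.mul_sum, (hA _).2, mul_one]
  exact hp.2

lemma mix_dist {ι κ : Type*} [Fintype ι] [Fintype κ] (p q : ι → ℝ) (hq : q ∈ simplex ι)
    (A B : ι → κ → ℝ) (hA : ∀ x, A x ∈ simplex κ) (c : ℝ)
    (hAB : ∀ x, l1dist (A x) (B x) ≤ c) :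
    l1dist (fun y => ∑ x, p x * A x y) (fun y => ∑ x, q x * B x y) ≤ l1dist p q + c := by
  have h1 : ∀ y, |∑ x, p x * A x y - ∑ x, q x * B x y| ≤
      ∑ x, (|p x - q x| * A x y + q x * |A x y - B x y|) := by
    intro y
    rw [← Finset.sum_sub_distrib]
    refine (Finset.abs_sum_le_sum_abs _ _).trans (Finset.sum_le_sum fun x _ => ?_)
    have : p x * A x y - q x * B x y = (p x - q x) * A x y + q x * (A x y - B x y) := by ring
    rw [this]
    refine (abs_add_le _ _).trans ?_
    rw [abs_mul, abs_mul, abs_of_nonneg ((hA x).1 y), abs_of_nonneg (hq.1 x)]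
  calc l1dist (fun y => ∑ x, p x * A x y) (fun y => ∑ x, q x * B x y)
      ≤ ∑ y, ∑ x, (|p x - q x| * A x y + q x * |A x y - B x y|) :=
        Finset.sum_le_sum fun y _ => h1 y
    _ = ∑ x, (|p x - q x| + q x * l1dist (A x) (B x)) := by
        rw [Finset.sum_comm]
        refine Finset.sum_congr rfl fun x _ => ?_
        rw [Finset.sum_add_distrib, ← Finset.mul_sum, ← Finset.mul_sum, (hA x).2, mul_one]
        rfl
    _ ≤ ∑ x, (|p x - q x| + q x * c) := by
        gcongr with x
        · exact hq.1 x
        · exact hAB x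
    _ = l1dist p q + c := by
        rw [Finset.sum_add_distrib, ← Finset.sum_mul, hq.2, one_mul]; rfl

lemma l1dist_self {ι : Type*} [Fintype ι] (p : ι → ℝ) : l1dist p p = 0 := by simp [l1dist]

lemma l1dist_nonneg {ι : Type*} [Fintype ι] (p q : ι → ℝ) : 0 ≤ l1dist p q :=
  Finset.sum_nonneg fun _ _ => abs_nonneg _

section helpers
variable {X U : Type*} [Fintype X] [Fintype U]

lemma pol_mem (P : X → U → (X → ℝ) → X → ℝ) (hP : IsKernel P) (π : ℕ → X → U → ℝ)
    (hπ : IsPolicy π) (G : X → ℝ) (hG : G ∈ subProb X) (t : ℕ) (x : X) :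
    (fun x' => ∑ u, π t x u * P x u G x') ∈ simplex X :=
  mix_mem (π t x) (hπ t x) (fun u => P x u G) (fun u => hP x u G hG)

lemma stateLaw_mem (P : X → U → (X → ℝ) → X → ℝ) (hP : IsKernel P) (μ0 : X → ℝ)
    (hμ0 : μ0 ∈ simplex X) (π : ℕ → X → U → ℝ)
    (hπ : IsPolicy π) (G : ℕ → X → ℝ) (hG : ∀ t, G t ∈ subProb X) (t : ℕ) :
    stateLaw P μ0 G π t ∈ simplex X := by
  induction t with
  | zero => exact hμ0
  | succ t ih =>
    exact mix_mem _ ih (fun x x' => ∑ u, π t x u * P x u (G t) x')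
      (fun x => pol_mem P hP π hπ (G t) (hG t) t x)

lemma stateLaw_dist (P : X → U → (X → ℝ) → X → ℝ) (hP : IsKernel P) (μ0 : X → ℝ)
    (hμ0 : μ0 ∈ simplex X) (L : ℝ) (hL : KernelLipschitz P L) (π : ℕ → X → U → ℝ)
    (hπ : IsPolicy π) (G G' : ℕ → X → ℝ) (hG : ∀ t, G t ∈ subProb X)
    (hG' : ∀ t, G' t ∈ subProb X) (t : ℕ) :
    l1dist (stateLaw P μ0 G π t) (stateLaw P μ0 G' π t) ≤
      ∑ s ∈ Finset.range t, L * l1dist (G s) (G' s) := by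
  induction t with
  | zero => simp [stateLaw, l1dist]
  | succ t ih =>
    rw [Finset.sum_range_succ]
    refine (mix_dist (stateLaw P μ0 G π t) (stateLaw P μ0 G' π t)
      (stateLaw_mem P hP μ0 hμ0 π hπ G' hG' t)
      (fun x x' => ∑ u, π t x u * P x u (G t) x') (fun x x' => ∑ u, π t x u * P x u (G' t) x')
      (fun x => pol_mem P hP π hπ (G t) (hG t) t x) (L * l1dist (G t) (G' t)) ?_).trans ?_
    · intro x
      have := mix_dist (π t x) (π t x) (hπ t x) (fun u => P x u (G t)) (fun u => P x u (G' t))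
        (fun u => hP x u _ (hG t)) (L * l1dist (G t) (G' t))
        (fun u => hL x u _ _ (hG t) (hG' t))
      rwa [l1dist_self, zero_add] at this
    · linarith

lemma pair_bound {ι : Type*} [Fintype ι] (p q f g : ι → ℝ) (hq : q ∈ simplex ι) (R c : ℝ)
    (hf : ∀ x, |f x| ≤ R) (hfg : ∀ x, |f x - g x| ≤ c) :
    |∑ x, p x * f x - ∑ x, q x * g x| ≤ R * l1dist p q + c := by
  rw [← Finset.sum_sub_distrib]
  calc |∑ x, (p x * f x - q x * g x)| ≤ ∑ x, |p x * f x - q x * g x| :=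
        Finset.abs_sum_le_sum_abs _ _
    _ ≤ ∑ x, (R * |p x - q x| + q x * c) := by
        refine Finset.sum_le_sum fun x _ => ?_
        have : p x * f x - q x * g x = f x * (p x - q x) + q x * (f x - g x) := by ring
        rw [this]
        refine (abs_add_le _ _).trans ?_
        rw [abs_mul, abs_mul, abs_of_nonneg (hq.1 x)]
        have h1 := mul_le_mul_of_nonneg_right (hf x) (abs_nonneg (p x - q x))
        have h2 := mul_le_mul_of_nonneg_left (hfg x) (hq.1 x)
        linarith
    _ = R * l1dist p q + c := by
        rw [Finset.sum_add_distrib, ← Finset.mul_sum, ← Finset.sum_mul, hq.2, one_mul]; rfl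

lemma Jmf_dist (T : ℕ) (r : X → U → (X → ℝ) → ℝ) (P : X → U → (X → ℝ) → X → ℝ)
    (hP : IsKernel P) (μ0 : X → ℝ)
    (hμ0 : μ0 ∈ simplex X) (L Lr R : ℝ) (hL0 : 0 ≤ L) (hLr0 : 0 ≤ Lr) (hR0 : 0 ≤ R)
    (hL : KernelLipschitz P L) (hr : RewardLipschitz r Lr)
    (hR : ∀ x u ν, ν ∈ subProb X → |r x u ν| ≤ R) (π : ℕ → X → U → ℝ)
    (hπ : IsPolicy π) (G G' : ℕ → X → ℝ) (hG : ∀ t, G t ∈ subProb X)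
    (hG' : ∀ t, G' t ∈ subProb X) (δ : ℝ) (hδ0 : 0 ≤ δ)
    (hδ : ∀ t < T, l1dist (G t) (G' t) ≤ δ) :
    |Jmf T r P μ0 G π - Jmf T r P μ0 G' π| ≤ (T * (R * (T * L) + Lr)) * δ := by
  unfold Jmf
  rw [← Finset.sum_sub_distrib]
  refine (Finset.abs_sum_le_sum_abs _ _).trans ?_
  have key : ∀ t ∈ Finset.range T,
      |∑ x, stateLaw P μ0 G π t x * ∑ u, π t x u * r x u (G t) -
        ∑ x, stateLaw P μ0 G' π t x * ∑ u, π t x u * r x u (G' t)| ≤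
        (R * (T * L) + Lr) * δ := by
    intro t ht
    have ht' := Finset.mem_range.1 ht
    have hd := stateLaw_dist P hP μ0 hμ0 L hL π hπ G G' hG hG' t
    have hd2 : ∑ s ∈ Finset.range t, L * l1dist (G s) (G' s) ≤ T * (L * δ) := by
      calc _ ≤ ∑ s ∈ Finset.range t, L * δ := by
            refine Finset.sum_le_sum fun s hs => ?_
            exact mul_le_mul_of_nonneg_left (hδ s ((Finset.mem_range.1 hs).trans ht')) hL0
        _ = t * (L * δ) := by simp
        _ ≤ T * (L * δ) := by
            gcongr
    have h := pair_bound (stateLaw P μ0 G π t) (stateLaw P μ0 G' π t)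
      (fun x => ∑ u, π t x u * r x u (G t)) (fun x => ∑ u, π t x u * r x u (G' t))
      (stateLaw_mem P hP μ0 hμ0 π hπ G' hG' t) R (Lr * δ) ?_ ?_
    · refine h.trans ?_
      have := mul_le_mul_of_nonneg_left (hd.trans hd2) hR0
      linarith
    · intro x
      have := pair_bound (π t x) (π t x) (fun u => r x u (G t)) (fun _ => 0) (hπ t x) R R
        (fun u => hR x u _ (hG t)) (fun u => by simpa using hR x u _ (hG t))
      simpa [l1dist_self] using this
    · intro x
      have := pair_bound (π t x) (π t x) (fun u => r x u (G t)) (fun u => r x u (G' t))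
        (hπ t x) R (Lr * δ)
        (fun u => hR x u _ (hG t))
        (fun u => (hr x u _ _ (hG t) (hG' t)).trans
          (mul_le_mul_of_nonneg_left (hδ t ht') hLr0))
      simpa [l1dist_self] using this
  refine (Finset.sum_le_sum key).trans ?_
  simp [mul_assoc]

lemma simplex_le_one {p : X → ℝ} (hp : p ∈ simplex X) (x : X) : p x ≤ 1 := by
  rw [← hp.2]
  exact Finset.single_le_sum (f := p) (fun i _ => hp.1 i) (Finset.mem_univ x)

lemma nbhd_integrable (W : ℝ → ℝ → ℝ) (hW : IsGraphon W) (ν : ℝ → X → ℝ)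
    (hm : ∀ x, Measurable fun α => ν α x) (hν : ∀ α ∈ Set.Icc (0:ℝ) 1, ν α ∈ simplex X)
    (α : ℝ) (x : X) : IntegrableOn (fun β => W α β * ν β x) (Set.Ioc 0 1) := by
  have hWm : Measurable (W α) := hW.1.comp measurable_prodMk_left
  refine Measure.integrableOn_of_bounded (M := 1) (by simp)
    (hWm.mul (hm x)).aestronglyMeasurable ?_
  refine (ae_restrict_iff' measurableSet_Ioc).2 (Eventually.of_forall fun β hβ => ?_)
  have h1 := hW.2.2 α β
  have h2 := hν β (Set.Ioc_subset_Icc_self hβ)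
  rw [Real.norm_eq_abs, abs_of_nonneg (mul_nonneg h1.1 (h2.1 x))]
  exact mul_le_one₀ h1.2 (h2.1 x) (simplex_le_one h2 x)

lemma nbhd_mem (W : ℝ → ℝ → ℝ) (hW : IsGraphon W) (ν : ℝ → X → ℝ)
    (hm : ∀ x, Measurable fun α => ν α x) (hν : ∀ α ∈ Set.Icc (0:ℝ) 1, ν α ∈ simplex X)
    (α : ℝ) : nbhd W ν α ∈ subProb X := by
  refine ⟨fun x => ?_, ?_⟩
  · refine setIntegral_nonneg measurableSet_Ioc fun β hβ => ?_
    exact mul_nonneg (hW.2.2 α β).1 ((hν β (Set.Ioc_subset_Icc_self hβ)).1 x)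
  · unfold nbhd
    rw [← integral_finsetSum _ (fun x _ => nbhd_integrable W hW ν hm hν α x)]
    have hb : ∀ β ∈ Set.Ioc (0:ℝ) 1, ‖∑ x, W α β * ν β x‖ ≤ 1 := by
      intro β hβ
      rw [← Finset.mul_sum, (hν β (Set.Ioc_subset_Icc_self hβ)).2, mul_one, Real.norm_eq_abs,
        abs_of_nonneg (hW.2.2 α β).1]
      exact (hW.2.2 α β).2
    have := norm_setIntegral_le_of_norm_le_const (μ := volume) (s := Set.Ioc (0:ℝ) 1)
      (by simp) hb
    refine (le_abs_self _).trans ?_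
    simpa using this

lemma approxNbhd_mem {M : ℕ} (W : ℝ → ℝ → ℝ) (hW : IsGraphon W) (ν : Fin M → X → ℝ)
    (hν : ∀ m, ν m ∈ simplex X) (m : Fin M) : approxNbhd W ν m ∈ subProb X := by
  refine ⟨fun x => ?_, ?_⟩
  · exact mul_nonneg (by positivity) (Finset.sum_nonneg fun n _ =>
      mul_nonneg (hW.2.2 _ _).1 ((hν n).1 x))
  · unfold approxNbhd
    rw [← Finset.mul_sum, Finset.sum_comm]
    simp_rw [← Finset.mul_sum, (hν _).2, mul_one]
    have hM : (0:ℝ) < M := by exact_mod_cast m.pos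
    rw [inv_mul_le_iff₀ hM, mul_one]
    calc _ ≤ ∑ n : Fin M, (1:ℝ) := Finset.sum_le_sum fun n _ => (hW.2.2 _ _).2
      _ = M := by simp

lemma rep_mem {M : ℕ} (m : Fin M) : rep M m ∈ Set.Icc (0:ℝ) 1 := by
  have hM : (0:ℝ) < M := by exact_mod_cast m.pos
  unfold rep
  refine ⟨by positivity, ?_⟩
  rw [div_le_one hM]
  exact_mod_cast m.2

lemma block_subset {M : ℕ} (m : Fin M) {α : ℝ}
    (hα : α ∈ Set.Ioc (((m : ℕ) : ℝ) / M) ((((m : ℕ) : ℝ) + 1) / M)) :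
    α ∈ Set.Icc (0:ℝ) 1 ∧ |α - rep M m| ≤ 1 / M := by
  have hM : (0:ℝ) < M := by exact_mod_cast m.pos
  have h := rep_mem m
  unfold rep at *
  have h0 : (0:ℝ) ≤ ((m : ℕ) : ℝ) / M := by positivity
  have h3 : (((m : ℕ) : ℝ) + 1) / M = ((m : ℕ) : ℝ) / M + 1 / M := by ring
  refine ⟨⟨by linarith [hα.1], hα.2.trans h.2⟩, ?_⟩
  rw [abs_le]
  constructor <;> linarith [hα.1, hα.2, (by positivity : (0:ℝ) < 1 / M)]

lemma exists_block {M : ℕ} (hM : 0 < M) (α : ℝ) (hα : α ∈ Set.Icc (0:ℝ) 1) :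
    ∃ m : Fin M, α ∈ Set.Ioc (((m : ℕ) : ℝ) / M) ((((m : ℕ) : ℝ) + 1) / M) ∨
      ((m : ℕ) = 0 ∧ α = 0) := by
  have hM' : (0:ℝ) < M := by exact_mod_cast hM
  rcases hα.1.eq_or_lt with h | h
  · exact ⟨⟨0, hM⟩, Or.inr ⟨rfl, h.symm⟩⟩
  · have hpos : 0 < ⌈α * M⌉₊ := Nat.ceil_pos.2 (by positivity)
    have hle : ⌈α * M⌉₊ ≤ M := Nat.ceil_le.2 (by nlinarith [hα.2])
    have hc : (((⌈α * M⌉₊ - 1 : ℕ)) : ℝ) + 1 = (⌈α * M⌉₊ : ℝ) := by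
      exact_mod_cast Nat.sub_add_cancel hpos
    refine ⟨⟨⌈α * M⌉₊ - 1, by omega⟩, Or.inl ⟨?_, ?_⟩⟩
    · rw [div_lt_iff₀ hM']
      have := Nat.ceil_lt_add_one (show 0 ≤ α * M by positivity)
      simp only
      linarith
    · rw [le_div_iff₀ hM']
      simp only
      rw [hc]
      exact Nat.le_ceil _

lemma nbhd_dist {M : ℕ} (hM : 0 < M) (W : ℝ → ℝ → ℝ) (hW : IsGraphon W) (LW : ℝ) (hL0 : 0 ≤ LW)
    (hWL : GraphonLipschitz W LW) (ν : ℝ → X → ℝ)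
    (hm : ∀ x, Measurable fun α => ν α x) (hν : ∀ α ∈ Set.Icc (0:ℝ) 1, ν α ∈ simplex X)
    (ν' : Fin M → X → ℝ) (hν' : ∀ m, ν' m ∈ simplex X) (d : ℝ)
    (hd : ∀ (n : Fin M) (β : ℝ),
      β ∈ Set.Ioc (((n : ℕ) : ℝ) / M) ((((n : ℕ) : ℝ) + 1) / M) → l1dist (ν β) (ν' n) ≤ d)
    (α : ℝ) (hα : α ∈ Set.Icc (0:ℝ) 1) (m : Fin M) (hαm : |α - rep M m| ≤ 1 / M) :
    l1dist (nbhd W ν α) (approxNbhd W ν' m) ≤ Fintype.card X * (LW * (2 / M) + d) := by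
  have hM' : (0:ℝ) < M := by exact_mod_cast hM
  unfold l1dist
  rw [← nsmul_eq_mul]
  refine Finset.sum_le_card_nsmul _ _ _ fun x _ => ?_
  set a : ℕ → ℝ := fun k => (k : ℝ) / M with ha
  have hmono : ∀ k, a k ≤ a (k+1) := fun k => by simp only [ha]; push_cast; gcongr; simp
  have hint : ∀ k < M, IntervalIntegrable (fun β => W α β * ν β x) volume (a k) (a (k+1)) := by
    intro k hk
    rw [intervalIntegrable_iff_integrableOn_Ioc_of_le (hmono k)]
    refine (nbhd_integrable W hW ν hm hν α x).mono_set (Set.Ioc_subset_Ioc ?_ ?_)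
    · simp only [ha]; positivity
    · simp only [ha]; rw [div_le_one hM']; exact_mod_cast hk
  have hsum : nbhd W ν α x = ∑ n : Fin M, ∫ β in (a n)..(a (n+1)), W α β * ν β x := by
    rw [Fin.sum_univ_eq_sum_range (fun k => ∫ β in (a k)..(a (k+1)), W α β * ν β x),
      intervalIntegral.sum_integral_adjacent_intervals hint]
    simp only [ha]
    rw [Nat.cast_zero, zero_div, div_self hM'.ne', intervalIntegral.integral_of_le zero_le_one]
    rfl
  have hlen : ∀ k : ℕ, a (k+1) - a k = (M:ℝ)⁻¹ := by
    intro k; simp only [ha]; push_cast; ring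
  have hsum' : approxNbhd W ν' m x =
      ∑ n : Fin M, ∫ β in (a n)..(a (n+1)), W (rep M m) (rep M n) * ν' n x := by
    unfold approxNbhd
    rw [Finset.mul_sum]
    refine Finset.sum_congr rfl fun n _ => ?_
    rw [intervalIntegral.integral_const, hlen, smul_eq_mul]
  rw [hsum, hsum', ← Finset.sum_sub_distrib]
  have hterm : ∀ n : Fin M, |(∫ β in (a n)..(a (n+1)), W α β * ν β x) -
      ∫ β in (a n)..(a (n+1)), W (rep M m) (rep M n) * ν' n x| ≤
      (LW * (2 / M) + d) * (M:ℝ)⁻¹ := by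
    intro n
    rw [← intervalIntegral.integral_sub (hint n n.2) intervalIntegrable_const]
    have := intervalIntegral.norm_integral_le_of_norm_le_const (a := a n) (b := a (n+1))
      (f := fun β => W α β * ν β x - W (rep M m) (rep M n) * ν' n x) (C := LW * (2 / M) + d) ?_
    · rwa [hlen, abs_of_pos (inv_pos.2 hM')] at this
    · intro β hβ
      rw [Set.uIoc_of_le (hmono n)] at hβ
      have hβ' : β ∈ Set.Ioc (((n : ℕ) : ℝ) / M) ((((n : ℕ) : ℝ) + 1) / M) := by
        simpa [ha] using hβ
      obtain ⟨hb1, hb2⟩ := block_subset n hβ'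
      have h1 := hWL α β (rep M m) (rep M n) hα hb1 (rep_mem m) (rep_mem n)
      have h2 : |W α β - W (rep M m) (rep M n)| ≤ LW * (2 / M) := by
        refine h1.trans (mul_le_mul_of_nonneg_left ?_ hL0)
        have : (2:ℝ) / M = 1 / M + 1 / M := by ring
        linarith
      have h3 : |ν β x - ν' n x| ≤ d :=
        (Finset.single_le_sum (f := fun x => |ν β x - ν' n x|) (fun i _ => abs_nonneg _)
          (Finset.mem_univ x)).trans (hd n β hβ')
      have h4 : W α β * ν β x - W (rep M m) (rep M n) * ν' n x =
        W α β * (ν β x - ν' n x) + (W α β - W (rep M m) (rep M n)) * ν' n x := by ring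
      rw [Real.norm_eq_abs, h4]
      refine (abs_add_le _ _).trans ?_
      have hw := hW.2.2 α β
      rw [abs_mul, abs_mul, abs_of_nonneg hw.1, abs_of_nonneg ((hν' n).1 x)]
      have h5 := mul_le_mul hw.2 h3 (abs_nonneg _) zero_le_one
      have h6 := mul_le_mul h2 (simplex_le_one (hν' n) x) ((hν' n).1 x) (by positivity)
      linarith
  refine (Finset.abs_sum_le_sum_abs _ _).trans ((Finset.sum_le_sum fun n _ => hterm n).trans ?_)
  rw [Finset.sum_const, Finset.card_univ, Fintype.card_fin, nsmul_eq_mul]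
  apply le_of_eq
  field_simp

lemma approxMF_mem {M : ℕ} (W : ℝ → ℝ → ℝ) (hW : IsGraphon W)
    (P : X → U → (X → ℝ) → X → ℝ) (hP : IsKernel P) (μ0 : X → ℝ)
    (hμ0 : μ0 ∈ simplex X) (πm : Fin M → ℕ → X → U → ℝ) (hπ : ∀ m, IsPolicy (πm m)) (t : ℕ) :
    ∀ m, approxMF W P μ0 πm t m ∈ simplex X := by
  induction t with
  | zero => exact fun _ => hμ0
  | succ t ih =>
    intro m
    exact mix_mem _ (ih m) (fun x x' => ∑ u, πm m t x u *
      P x u (approxNbhd W (approxMF W P μ0 πm t) m) x')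
      (fun x => pol_mem P hP (πm m) (hπ m) _ (approxNbhd_mem W hW _ ih m) t x)

lemma approxMF_eq {M : ℕ} (W : ℝ → ℝ → ℝ)
    (P : X → U → (X → ℝ) → X → ℝ) (μ0 : X → ℝ)
    (πm : Fin M → ℕ → X → U → ℝ) (m : Fin M) (t : ℕ) :
    approxMF W P μ0 πm t m =
      stateLaw P μ0 (fun t => approxNbhd W (approxMF W P μ0 πm t) m) (πm m) t := by
  induction t with
  | zero => rfl
  | succ t ih =>
    simp only [stateLaw]
    rw [← ih]
    rfl

lemma mf_mem (W : ℝ → ℝ → ℝ) (hW : IsGraphon W)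
    (P : X → U → (X → ℝ) → X → ℝ) (hP : IsKernel P) (μ0 : X → ℝ)
    (hμ0 : μ0 ∈ simplex X) (πe : ℝ → ℕ → X → U → ℝ)
    (hπ : ∀ α ∈ Set.Icc (0:ℝ) 1, IsPolicy (πe α)) (μ : ℕ → ℝ → X → ℝ)
    (hμ : IsMeanFieldOf W P μ0 πe μ) (t : ℕ) :
    ∀ α ∈ Set.Icc (0:ℝ) 1, μ t α ∈ simplex X := by
  induction t with
  | zero => intro α hα; rw [hμ.2.1 α hα]; exact hμ0
  | succ t ih =>
    intro α hα
    rw [funext (hμ.2.2 t α hα)]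
    exact mix_mem _ (ih α hα) (fun x x' => ∑ u, πe α t x u * P x u (nbhd W (μ t) α) x')
      (fun x => pol_mem P hP (πe α) (hπ α hα) _ (nbhd_mem W hW _ (hμ.1 t) ih α) t x)

lemma mf_eq (W : ℝ → ℝ → ℝ)
    (P : X → U → (X → ℝ) → X → ℝ) (μ0 : X → ℝ)
    (πe : ℝ → ℕ → X → U → ℝ) (μ : ℕ → ℝ → X → ℝ)
    (hμ : IsMeanFieldOf W P μ0 πe μ) (α : ℝ) (hα : α ∈ Set.Icc (0:ℝ) 1) (t : ℕ) :
    μ t α = stateLaw P μ0 (fun t => nbhd W (μ t) α) (πe α) t := by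
  induction t with
  | zero => exact hμ.2.1 α hα
  | succ t ih =>
    simp only [stateLaw]
    rw [← ih]
    exact funext (hμ.2.2 t α hα)

/-- Uniform `O(1/M)` bound on the neighborhood mean field error. -/
lemma nbhd_rate (μ0 : X → ℝ) (hμ0 : μ0 ∈ simplex X)
    (P : X → U → (X → ℝ) → X → ℝ) (hP : IsKernel P)
    (LP LW : ℝ) (hLP0 : 0 ≤ LP) (hLW0 : 0 ≤ LW) (hPLip : KernelLipschitz P LP)
    (W : ℝ → ℝ → ℝ) (hW : IsGraphon W) (hWLip : GraphonLipschitz W LW) (T : ℕ) :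
    ∃ K : ℝ, 0 ≤ K ∧ ∀ M > 0, ∀ πm : Fin M → ℕ → X → U → ℝ, (∀ m, IsPolicy (πm m)) →
      ∀ πe : ℝ → ℕ → X → U → ℝ, (∀ α ∈ Set.Icc (0:ℝ) 1, IsPolicy (πe α)) →
        (∀ (m : Fin M) (α : ℝ),
          α ∈ Set.Ioc (((m : ℕ) : ℝ) / M) ((((m : ℕ) : ℝ) + 1) / M) → πe α = πm m) →
        ∀ μ : ℕ → ℝ → X → ℝ, IsMeanFieldOf W P μ0 πe μ →
        ∀ α ∈ Set.Icc (0:ℝ) 1, ∀ m : Fin M, |α - rep M m| ≤ 1 / M → ∀ t < T,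
          l1dist (nbhd W (μ t) α) (approxNbhd W (approxMF W P μ0 πm t) m) ≤ K / M := by
  induction T with
  | zero => exact ⟨0, le_rfl, by simp⟩
  | succ T ih =>
    obtain ⟨K, hK0, hK⟩ := ih
    refine ⟨K + Fintype.card X * (LW * 2 + T * (LP * K)), by positivity, ?_⟩
    intro M hM πm hπm πe hπe hblk μ hμ α hα m hαm t ht
    have hM' : (0:ℝ) < M := by exact_mod_cast hM
    have hextra : 0 ≤ Fintype.card X * (LW * 2 + T * (LP * K)) := by positivity
    rcases (Nat.lt_succ_iff_lt_or_eq.1 ht) with h | rfl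
    · refine (hK M hM πm hπm πe hπe hblk μ hμ α hα m hαm t h).trans ?_
      gcongr
      linarith
    · have hmem := mf_mem W hW P hP μ0 hμ0 πe hπe μ hμ
      have hmem' := approxMF_mem W hW P hP μ0 hμ0 πm hπm
      have := nbhd_dist hM W hW LW hLW0 hWLip (μ t) (hμ.1 t) (hmem t)
        (approxMF W P μ0 πm t) (hmem' t) (t * (LP * (K / M))) ?_ α hα m hαm
      · refine this.trans ?_
        have e : (Fintype.card X : ℝ) * (LW * (2 / M) + t * (LP * (K / M))) =
          (Fintype.card X * (LW * 2 + t * (LP * K))) / M := by ring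
        rw [e]
        gcongr
        linarith
      · intro n β hβ
        obtain ⟨hb1, hb2⟩ := block_subset n hβ
        rw [mf_eq W P μ0 πe μ hμ β hb1, approxMF_eq, hblk n β hβ]
        refine (stateLaw_dist P hP μ0 hμ0 LP hPLip (πm n) (hπm n) _ _
          (fun s => nbhd_mem W hW _ (hμ.1 s) (hmem s) β)
          (fun s => approxNbhd_mem W hW _ (hmem' s) n) t).trans ?_
        calc _ ≤ ∑ s ∈ Finset.range t, LP * (K / M) := by
              refine Finset.sum_le_sum fun s hs => mul_le_mul_of_nonneg_left ?_ hLP0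
              exact hK M hM πm hπm πe hπe hblk μ hμ β hb1 n hb2 s (Finset.mem_range.1 hs)
          _ = t * (LP * (K / M)) := by simp

end helpers

/-- under Assumption (Lip), for any ε > 0 there exists M' ∈ ℕ such that
for all M > M', any solution (𝛑, 𝛍) of the M equivalence classes method satisfies
sup_{α∈[0,1]} max_{π∈Π} (J^𝛍̄_α(π) − J^𝛍̄_α(π^α)) < ε, where 𝛍̄ = Ψ(𝛑) is the exact
mean field ensemble generated by the block-constant policy ensemble 𝛑. -/
theorem eq_class_approximate_optimality
    {𝒳 𝒰 : Type*} [Fintype 𝒳] [Nonempty 𝒳] [Fintype 𝒰] [Nonempty 𝒰]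
    (T : ℕ) (μ0 : 𝒳 → ℝ) (hμ0 : μ0 ∈ simplex 𝒳)
    (P : 𝒳 → 𝒰 → (𝒳 → ℝ) → 𝒳 → ℝ) (hP : IsKernel P)
    (r : 𝒳 → 𝒰 → (𝒳 → ℝ) → ℝ)
    (Lr LP LW : ℝ) (hrLip : RewardLipschitz r Lr) (hPLip : KernelLipschitz P LP)
    (W : ℝ → ℝ → ℝ) (hW : IsGraphon W) (hWLip : GraphonLipschitz W LW)
    (ε : ℝ) (hε : 0 < ε) :
    ∃ M' : ℕ, ∀ M > M', ∀ πm : Fin M → ℕ → 𝒳 → 𝒰 → ℝ,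
      IsEqClassSolution T W P r μ0 πm →
      ∀ πe : ℝ → ℕ → 𝒳 → 𝒰 → ℝ,
        (∀ (m : Fin M) (α : ℝ),
          α ∈ Set.Ioc (((m : ℕ) : ℝ) / M) ((((m : ℕ) : ℝ) + 1) / M) → πe α = πm m) →
        (∀ m : Fin M, (m : ℕ) = 0 → πe 0 = πm m) →
        ∀ μbar : ℕ → ℝ → 𝒳 → ℝ, IsMeanFieldOf W P μ0 πe μbar →
        ∀ α ∈ Set.Icc (0:ℝ) 1, ∀ π' : ℕ → 𝒳 → 𝒰 → ℝ, IsPolicy π' →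
          Jmf T r P μ0 (fun t => nbhd W (μbar t) α) π' -
            Jmf T r P μ0 (fun t => nbhd W (μbar t) α) (πe α) < ε := by
  have hrLip' : RewardLipschitz r |Lr| := fun x u ν ν' h h' =>
    (hrLip x u ν ν' h h').trans (mul_le_mul_of_nonneg_right (le_abs_self _) (l1dist_nonneg _ _))
  have hPLip' : KernelLipschitz P |LP| := fun x u ν ν' h h' =>
    (hPLip x u ν ν' h h').trans (mul_le_mul_of_nonneg_right (le_abs_self _) (l1dist_nonneg _ _))
  have hWLip' : GraphonLipschitz W |LW| := fun a b a' b' h1 h2 h3 h4 =>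
    (hWLip a b a' b' h1 h2 h3 h4).trans
      (mul_le_mul_of_nonneg_right (le_abs_self _) (by positivity))
  obtain ⟨K, hK0, hK⟩ := nbhd_rate (U := 𝒰) μ0 hμ0 P hP |LP| |LW| (abs_nonneg _) (abs_nonneg _)
    hPLip' W hW hWLip' T
  obtain ⟨R, hR0, hR⟩ : ∃ R : ℝ, 0 ≤ R ∧ ∀ x u ν, ν ∈ subProb 𝒳 → |r x u ν| ≤ R := by
    refine ⟨(∑ x, ∑ u, |r x u 0|) + |Lr|, by positivity, fun x u ν hν => ?_⟩
    have h0 : (0 : 𝒳 → ℝ) ∈ subProb 𝒳 := ⟨fun _ => le_rfl, by simp⟩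
    have h1 := hrLip' x u ν 0 hν h0
    have h2 : l1dist ν 0 ≤ 1 := by
      unfold l1dist
      simp only [Pi.zero_apply, sub_zero, abs_of_nonneg (hν.1 _)]
      exact hν.2
    have h3 : |r x u 0| ≤ ∑ x, ∑ u, |r x u 0| :=
      (Finset.single_le_sum (f := fun u => |r x u 0|) (fun _ _ => abs_nonneg _)
        (Finset.mem_univ u)).trans
      (Finset.single_le_sum (f := fun x => ∑ u, |r x u 0|)
        (fun _ _ => Finset.sum_nonneg fun _ _ => abs_nonneg _) (Finset.mem_univ x))
    have h4 := mul_le_mul_of_nonneg_left h2 (abs_nonneg Lr)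
    have h5 := abs_sub_abs_le_abs_sub (r x u ν) (r x u 0)
    linarith
  set C : ℝ := T * (R * (T * |LP|) + |Lr|) with hC
  obtain ⟨M', hM'⟩ := exists_nat_gt (2 * (C * K) / ε)
  refine ⟨M', fun M hMM πm hsol πe hblk hzero μbar hμ α hα π' hπ' => ?_⟩
  have hM : 0 < M := by omega
  have hMr : (0:ℝ) < M := by exact_mod_cast hM
  have hcover : ∀ α ∈ Set.Icc (0:ℝ) 1, ∃ m : Fin M, πe α = πm m ∧ |α - rep M m| ≤ 1 / M := by
    intro α hα
    obtain ⟨m, h | ⟨h, rfl⟩⟩ := exists_block hM α hα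
    · exact ⟨m, hblk m α h, (block_subset m h).2⟩
    · refine ⟨m, hzero m h, ?_⟩
      unfold rep
      rw [h, abs_le]
      constructor <;> simp
  have hπe : ∀ α ∈ Set.Icc (0:ℝ) 1, IsPolicy (πe α) := by
    intro α hα
    obtain ⟨m, h, _⟩ := hcover α hα
    rw [h]; exact hsol.1 m
  obtain ⟨m, hm, hmα⟩ := hcover α hα
  have hmem := mf_mem W hW P hP μ0 hμ0 πe hπe μbar hμ
  have hmem' := approxMF_mem W hW P hP μ0 hμ0 πm hsol.1
  have hJ : ∀ π : ℕ → 𝒳 → 𝒰 → ℝ, IsPolicy π →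
      |Jmf T r P μ0 (fun t => nbhd W (μbar t) α) π -
        Jmf T r P μ0 (fun t => approxNbhd W (approxMF W P μ0 πm t) m) π| ≤ C * (K / M) :=
    fun π hπ => Jmf_dist T r P hP μ0 hμ0 |LP| |Lr| R (abs_nonneg _) (abs_nonneg _) hR0 hPLip'
      hrLip' hR π hπ _ _
      (fun s => nbhd_mem W hW _ (hμ.1 s) (hmem s) α)
      (fun s => approxNbhd_mem W hW _ (hmem' s) m) (K / M) (by positivity)
      (fun t ht => hK M hM πm hsol.1 πe hπe hblk μbar hμ α hα m hmα t ht)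
  have h1 := abs_le.1 (hJ π' hπ')
  have h2 := abs_le.1 (hJ (πm m) (hsol.1 m))
  have h3 := hsol.2 m π' hπ'
  rw [hm]
  have h4 : 2 * (C * (K / M)) < ε := by
    have hlt : 2 * (C * K) / ε < M := hM'.trans (by exact_mod_cast hMM)
    rw [div_lt_iff₀ hε] at hlt
    have : 2 * (C * (K / M)) = 2 * (C * K) / M := by ring
    rw [this, div_lt_iff₀ hMr]
    linarith
  linarith [h1.2, h2.1]

end GMFG
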